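/- For all positive integers k, ℓ, m, the following recursion holds: S⊖(k, ℓ | k, m) = S⊖(k, ℓ−1 | k, m) + S⊖(k, ℓ | k, m−1) − S⊖(k, ℓ−1 | k, m−1) + S⊖(k−1, ℓ | k−1, m) + |ℓ − m| · C(k−1+ℓ, ℓ) · C(k−1+m, m), where C(·,·) denotes a binomial coefficient. (Lemma 2.2.) -/

import Mathlib

open Finset

open scoped Classical in
/-- `Par a b` is the set of Young diagrams (lower sets of boxes) fitting inside an
`a × b` rectangle, encoded as finsets of cells `(i, j)` with `i < a` and `j < b`. -/
noncomputable def Par (a b : ℕ) : Finset (Finset (ℕ × ℕ)) :=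
  ((Finset.range a ×ˢ Finset.range b).powerset).filter
    (fun S => IsLowerSet (S : Set (ℕ × ℕ)))

/-- `Sdiff a b c d` is the sum of `|λ ⊖ μ|` over all `λ ∈ Par(a×b)` and `μ ∈ Par(c×d)`. -/
noncomputable def Sdiff (a b c d : ℕ) : ℕ :=
  ∑ l ∈ Par a b, ∑ m ∈ Par c d, (symmDiff l m).card

/-!
A diagram in an `a × b` rectangle either avoids the last column, and so fits in `a × (b - 1)`, or
contains the corner `(0, b - 1)`, and is then a full first row of length `b` on top of an arbitrary
diagram in `(a - 1) × b`. Splitting both summation ranges this way, the pairs in which at least one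
diagram avoids its last column are counted by inclusion–exclusion, and in the remaining pairs the
two full first rows contribute the difference of their lengths.
-/

open scoped symmDiff

section Par

variable {a b i j : ℕ} {S : Finset (ℕ × ℕ)}

theorem mem_Par : S ∈ Par a b ↔ S ⊆ range a ×ˢ range b ∧ IsLowerSet (S : Set (ℕ × ℕ)) := by
  simp only [Par, mem_filter, mem_powerset]

theorem lt_of_mem_Par (hS : S ∈ Par a b) (h : (i, j) ∈ S) : i < a ∧ j < b := by
  simpa using (mem_Par.1 hS).1 h

theorem mem_of_le_of_mem_Par (hS : S ∈ Par a b) {x y : ℕ × ℕ} (hxy : x ≤ y) (hy : y ∈ S) :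
    x ∈ S :=
  (mem_Par.1 hS).2 hxy hy

theorem Par_zero_left (b : ℕ) : Par 0 b = {∅} := by
  simp [Par, filter_singleton, isLowerSet_empty]

theorem Par_zero_right (a : ℕ) : Par a 0 = {∅} := by
  simp [Par, filter_singleton, isLowerSet_empty]

theorem filter_corner_notMem_Par (a b : ℕ) : {S ∈ Par a (b + 1) | (0, b) ∉ S} = Par a b := by
  ext S
  rw [mem_filter]
  constructor
  · rintro ⟨hS, hcorner⟩
    refine mem_Par.2 ⟨fun ⟨i, j⟩ hij => ?_, (mem_Par.1 hS).2⟩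
    have hj : j < b := by
      by_contra! hbj
      exact hcorner (mem_of_le_of_mem_Par hS ⟨i.zero_le, hbj⟩ hij)
    simpa using ⟨(lt_of_mem_Par hS hij).1, hj⟩
  · intro hS
    have hsub : range a ×ˢ range b ⊆ range a ×ˢ range (b + 1) :=
      product_subset_product_right (range_subset_range.2 b.le_succ)
    exact ⟨mem_Par.2 ⟨(mem_Par.1 hS).1.trans hsub, (mem_Par.1 hS).2⟩,
      fun h => (lt_of_mem_Par hS h).2.false⟩

end Par

section Rows

variable {a b l i j : ℕ} {S : Finset (ℕ × ℕ)}

/-- The translation `(i, j) ↦ (i + 1, j)` of cells down by one row. -/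
def rowShift : ℕ × ℕ ↪ ℕ × ℕ :=
  (addRightEmbedding 1).prodMap (Function.Embedding.refl ℕ)

/-- The cell set obtained from `S` by placing a new first row of length `l` on top of it. It is
a Young diagram only when no row of `S` is longer than `l`. -/
def consRow (l : ℕ) (S : Finset (ℕ × ℕ)) : Finset (ℕ × ℕ) :=
  {0} ×ˢ range l ∪ S.map rowShift

/-- The cell set obtained from `S` by deleting its first row and moving the rest up. -/
noncomputable def tailRows (S : Finset (ℕ × ℕ)) : Finset (ℕ × ℕ) :=
  S.preimage rowShift rowShift.injective.injOn

theorem rowShift_apply (i j : ℕ) : rowShift (i, j) = (i + 1, j) := rfl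

theorem monotone_rowShift : Monotone rowShift :=
  fun _ _ h => ⟨Nat.succ_le_succ h.1, h.2⟩

@[simp]
theorem zero_mem_consRow : (0, j) ∈ consRow l S ↔ j < l := by
  simp [consRow, rowShift_apply]

@[simp]
theorem succ_mem_consRow : (i + 1, j) ∈ consRow l S ↔ (i, j) ∈ S := by
  simp [consRow, rowShift_apply]

@[simp]
theorem mem_tailRows : (i, j) ∈ tailRows S ↔ (i + 1, j) ∈ S := by
  simp [tailRows, rowShift_apply]

theorem tailRows_consRow (l : ℕ) (S : Finset (ℕ × ℕ)) : tailRows (consRow l S) = S := by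
  ext ⟨i, j⟩
  rw [mem_tailRows, succ_mem_consRow]

theorem consRow_injective (l : ℕ) : Function.Injective (consRow l) :=
  Function.LeftInverse.injective (tailRows_consRow l)

theorem consRow_tailRows (hrow : ∀ j, (0, j) ∈ S ↔ j < l) : consRow l (tailRows S) = S := by
  ext ⟨_ | i, j⟩
  · rw [zero_mem_consRow, hrow]
  · rw [succ_mem_consRow, mem_tailRows]

theorem isLowerSet_consRow (hS : IsLowerSet (S : Set (ℕ × ℕ))) (hl : ∀ x ∈ S, x.2 < l) :
    IsLowerSet (consRow l S : Set (ℕ × ℕ)) := by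
  rintro ⟨_ | i, j⟩ ⟨_ | i', j'⟩ ⟨hi, hj⟩ h <;>
    simp only [mem_coe, zero_mem_consRow, succ_mem_consRow] at h ⊢
  · exact hj.trans_lt h
  · exact absurd hi i'.not_succ_le_zero
  · exact hj.trans_lt (hl (i, j) h)
  · exact hS (Prod.mk_le_mk.2 ⟨Nat.le_of_succ_le_succ hi, hj⟩) h

theorem consRow_mem_Par (hS : S ∈ Par a b) : consRow b S ∈ Par (a + 1) b := by
  refine mem_Par.2 ⟨?_, isLowerSet_consRow (mem_Par.1 hS).2 fun _ h => (lt_of_mem_Par hS h).2⟩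
  rintro ⟨_ | i, j⟩ h
  · simpa using h
  · simpa using lt_of_mem_Par hS (succ_mem_consRow.1 h)

theorem tailRows_mem_Par (hS : S ∈ Par (a + 1) b) : tailRows S ∈ Par a b := by
  refine mem_Par.2 ⟨fun ⟨i, j⟩ h => ?_, ?_⟩
  · simpa using lt_of_mem_Par hS (mem_tailRows.1 h)
  · rw [tailRows, coe_preimage]
    exact (mem_Par.1 hS).2.preimage monotone_rowShift

theorem filter_corner_mem_Par (a b : ℕ) :
    {S ∈ Par (a + 1) (b + 1) | (0, b) ∈ S} = (Par a (b + 1)).image (consRow (b + 1)) := by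
  ext S
  rw [mem_filter, mem_image]
  constructor
  · rintro ⟨hS, hcorner⟩
    have hrow (j : ℕ) : (0, j) ∈ S ↔ j < b + 1 :=
      ⟨fun h => (lt_of_mem_Par hS h).2,
        fun h => mem_of_le_of_mem_Par hS (Prod.mk_le_mk.2 ⟨le_rfl, Nat.le_of_lt_succ h⟩)
          hcorner⟩
    exact ⟨tailRows S, tailRows_mem_Par hS, consRow_tailRows hrow⟩
  · rintro ⟨T, hT, rfl⟩
    exact ⟨consRow_mem_Par hT, zero_mem_consRow.2 b.lt_succ_self⟩

theorem symmDiff_consRow (l m : ℕ) (S T : Finset (ℕ × ℕ)) :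
    consRow l S ∆ consRow m T = {0} ×ˢ (range l ∆ range m) ∪ (S ∆ T).map rowShift := by
  ext ⟨_ | i, j⟩ <;> simp [mem_symmDiff, rowShift_apply]

theorem card_symmDiff_range (l m : ℕ) : (#(range l ∆ range m) : ℤ) = |(l : ℤ) - m| := by
  wlog h : l ≤ m generalizing l m
  · rw [symmDiff_comm, this m l (le_of_not_ge h), abs_sub_comm]
  · have hsub : range l ⊆ range m := range_subset_range.2 h
    rw [symmDiff_of_le hsub, card_sdiff_of_subset hsub, card_range, card_range, Nat.cast_sub h,
      abs_sub_comm, abs_of_nonneg (sub_nonneg.2 (Nat.cast_le.2 h))]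

theorem card_symmDiff_consRow (l m : ℕ) (S T : Finset (ℕ × ℕ)) :
    (#(consRow l S ∆ consRow m T) : ℤ) = |(l : ℤ) - m| + #(S ∆ T) := by
  have hdisj : Disjoint ({0} ×ˢ (range l ∆ range m)) ((S ∆ T).map rowShift) := by
    rw [disjoint_left]
    rintro ⟨_ | i, j⟩ <;> simp [rowShift_apply]
  rw [symmDiff_consRow, card_union_of_disjoint hdisj, card_product, card_singleton, one_mul,
    card_map, Nat.cast_add, card_symmDiff_range]

theorem sum_card_symmDiff_consRow (l m : ℕ) (𝒮 𝒯 : Finset (Finset (ℕ × ℕ))) :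
    ∑ S ∈ 𝒮, ∑ T ∈ 𝒯, (#(consRow l S ∆ consRow m T) : ℤ) =
      ∑ S ∈ 𝒮, ∑ T ∈ 𝒯, (#(S ∆ T) : ℤ) + |(l : ℤ) - m| * #𝒮 * #𝒯 := by
  simp only [card_symmDiff_consRow, sum_add_distrib, sum_const, nsmul_eq_mul]
  ring

end Rows

theorem sum_Par_succ_succ {M : Type*} [AddCommMonoid M] (a b : ℕ) (f : Finset (ℕ × ℕ) → M) :
    ∑ S ∈ Par (a + 1) (b + 1), f S =
      ∑ S ∈ Par (a + 1) b, f S + ∑ S ∈ Par a (b + 1), f (consRow (b + 1) S) := by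
  rw [← sum_filter_not_add_sum_filter _ (fun S => (0, b) ∈ S), filter_corner_notMem_Par,
    filter_corner_mem_Par, sum_image (consRow_injective _).injOn]

theorem card_Par (a b : ℕ) : #(Par a b) = (a + b).choose b := by
  induction a generalizing b with
  | zero => simp [Par_zero_left]
  | succ a iha =>
    induction b with
    | zero => simp [Par_zero_right]
    | succ b ihb =>
      calc #(Par (a + 1) (b + 1)) = #(Par (a + 1) b) + #(Par a (b + 1)) := by
            simpa only [card_eq_sum_ones] using sum_Par_succ_succ a b fun _ => 1
        _ = (a + 1 + b).choose b + (a + 1 + b).choose (b + 1) := by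
            rw [ihb, iha, add_right_comm a 1 b, add_assoc a b 1]
        _ = (a + 1 + (b + 1)).choose (b + 1) := (Nat.choose_succ_succ _ _).symm

theorem sum_sum_Par_succ_succ {M : Type*} [AddCommGroup M] (a b c d : ℕ)
    (f : Finset (ℕ × ℕ) → Finset (ℕ × ℕ) → M) :
    ∑ S ∈ Par (a + 1) (b + 1), ∑ T ∈ Par (c + 1) (d + 1), f S T =
      ∑ S ∈ Par (a + 1) b, ∑ T ∈ Par (c + 1) (d + 1), f S T
        + ∑ S ∈ Par (a + 1) (b + 1), ∑ T ∈ Par (c + 1) d, f S T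
        - ∑ S ∈ Par (a + 1) b, ∑ T ∈ Par (c + 1) d, f S T
        + ∑ S ∈ Par a (b + 1), ∑ T ∈ Par c (d + 1), f (consRow (b + 1) S) (consRow (d + 1) T) := by
  simp only [sum_Par_succ_succ a b, sum_Par_succ_succ c d, sum_add_distrib]
  abel

theorem cast_Sdiff (a b c d : ℕ) :
    (Sdiff a b c d : ℤ) = ∑ S ∈ Par a b, ∑ T ∈ Par c d, (#(S ∆ T) : ℤ) := by
  simp only [Sdiff, Nat.cast_sum]

theorem sdiff_recursion_general (a b c d : ℕ) (ha : 0 < a) (hb : 0 < b) (hc : 0 < c)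
    (hd : 0 < d) :
    (Sdiff a b c d : ℤ) =
      (Sdiff a (b - 1) c d : ℤ) + (Sdiff a b c (d - 1) : ℤ)
        - (Sdiff a (b - 1) c (d - 1) : ℤ)
        + (Sdiff (a - 1) b (c - 1) d : ℤ)
        + |(b : ℤ) - (d : ℤ)| * ((a - 1 + b).choose b : ℤ) * ((c - 1 + d).choose d : ℤ) := by
  obtain ⟨a, rfl⟩ := Nat.exists_eq_add_one.2 ha
  obtain ⟨b, rfl⟩ := Nat.exists_eq_add_one.2 hb
  obtain ⟨c, rfl⟩ := Nat.exists_eq_add_one.2 hc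
  obtain ⟨d, rfl⟩ := Nat.exists_eq_add_one.2 hd
  simp only [Nat.add_sub_cancel, cast_Sdiff, ← card_Par]
  rw [sum_sum_Par_succ_succ, sum_card_symmDiff_consRow, ← add_assoc]

/-- Lemma 2.2: the recursion for the sums of symmetric differences. -/
theorem sdiff_recursion (k l m : ℕ) (hk : 0 < k) (hl : 0 < l) (hm : 0 < m) :
    (Sdiff k l k m : ℤ) =
      (Sdiff k (l - 1) k m : ℤ) + (Sdiff k l k (m - 1) : ℤ)
        - (Sdiff k (l - 1) k (m - 1) : ℤ)
        + (Sdiff (k - 1) l (k - 1) m : ℤ)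
        + |(l : ℤ) - (m : ℤ)| * ((k - 1 + l).choose l : ℤ) * ((k - 1 + m).choose m : ℤ) :=
  sdiff_recursion_general k l k m hk hl hk hm
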